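/- Suppose G is connected and p > r + 2, and set C_p = 2(p + r − 2)/(p − r − 2). Then every second-order critical point Y of the rank-p problem satisfies rank(Y) ≤ r + 5 C_p² (‖Δ‖/λ₂)² r n. If moreover p > r + 5 C_p² (‖Δ‖/λ₂)² r n, then Y is a global minimizer of the rank-p problem (⟨L̂, Y Yᵀ⟩ ≤ ⟨L̂, Y′Y′ᵀ⟩ for every feasible Y′) and Y Yᵀ is an optimal solution of the SDP relaxation. -/

import Mathlib

open Matrix MeasureTheory ProbabilityTheory
open scoped Kronecker BigOperators

namespace SyncPaper

variable {α : Type*}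

/-- The `i`-th `r × p` row-block of a block matrix `Y ∈ α^{rn × p}`. -/
def blk {n r p : ℕ} (Y : Matrix (Fin n × Fin r) (Fin p) α) (i : Fin n) :
    Matrix (Fin r) (Fin p) α :=
  Matrix.of fun a b => Y (i, a) b

/-- `Y` is feasible: every `r × p` row-block has orthonormal rows. -/
def Feasible {n r p : ℕ} (Y : Matrix (Fin n × Fin r) (Fin p) ℝ) : Prop :=
  ∀ i, blk Y i * (blk Y i)ᵀ = 1

/-- Symmetric block-diagonal projection: keeps the symmetric part of each `r × r`
diagonal block and zeroes out all off-diagonal blocks. -/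
noncomputable def SBD {n r : ℕ} (M : Matrix (Fin n × Fin r) (Fin n × Fin r) ℝ) :
    Matrix (Fin n × Fin r) (Fin n × Fin r) ℝ :=
  Matrix.of fun q q' => if q.1 = q'.1 then (M q q' + M q' q) / 2 else 0

/-- The matrix `S(Y) = L̂ − SBD(L̂ Y Yᵀ)`. -/
noncomputable def Smat {n r p : ℕ} (Lhat : Matrix (Fin n × Fin r) (Fin n × Fin r) ℝ)
    (Y : Matrix (Fin n × Fin r) (Fin p) ℝ) :
    Matrix (Fin n × Fin r) (Fin n × Fin r) ℝ :=
  Lhat - SBD (Lhat * Y * Yᵀ)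

/-- Second-order critical point of the rank-`p` problem `min ⟨L̂, Y Yᵀ⟩` over feasible `Y`. -/
def IsSecondOrderCritical {n r p : ℕ} (Lhat : Matrix (Fin n × Fin r) (Fin n × Fin r) ℝ)
    (Y : Matrix (Fin n × Fin r) (Fin p) ℝ) : Prop :=
  Feasible Y ∧ Smat Lhat Y * Y = 0 ∧
    ∀ Ydot : Matrix (Fin n × Fin r) (Fin p) ℝ,
      (∀ i, blk Ydot i * (blk Y i)ᵀ + blk Y i * (blk Ydot i)ᵀ = 0) →
      0 ≤ (Smat Lhat Y * Ydot * Ydotᵀ).trace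

/-- The stacked ground truth `Z ∈ ℝ^{rn × r}`. -/
def Zstack {n r : ℕ} (Zb : Fin n → Matrix (Fin r) (Fin r) ℝ) :
    Matrix (Fin n × Fin r) (Fin r) ℝ :=
  Matrix.of fun q b => Zb q.1 q.2 b

/-- The block-diagonal matrix `D` with diagonal blocks `Z_1, …, Z_n`. -/
def Dmat {n r : ℕ} (Zb : Fin n → Matrix (Fin r) (Fin r) ℝ) :
    Matrix (Fin n × Fin r) (Fin n × Fin r) ℝ :=
  Matrix.of fun q q' => if q.1 = q'.1 then Zb q.1 q.2 q'.2 else 0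

/-- `L_Z = D (L ⊗ I_r) Dᵀ`. -/
def LZmat {n r : ℕ} (L : Matrix (Fin n) (Fin n) ℝ) (Zb : Fin n → Matrix (Fin r) (Fin r) ℝ) :
    Matrix (Fin n × Fin r) (Fin n × Fin r) ℝ :=
  Dmat Zb * (L ⊗ₖ (1 : Matrix (Fin r) (Fin r) ℝ)) * (Dmat Zb)ᵀ

/-- The ℓ₂→ℓ₂ operator norm of a matrix. -/
noncomputable def opNorm {m m' : Type*} [Fintype m] [Fintype m'] [DecidableEq m']
    (M : Matrix m m' ℝ) : ℝ :=
  ‖(Matrix.toEuclideanLin (𝕜 := ℝ) (m := m) (n := m')).trans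
      LinearMap.toContinuousLinearMap M‖

/-- The second-smallest eigenvalue of a connected graph Laplacian, via the variational
(Courant–Fischer) characterization: the minimum of the quadratic form over unit vectors
orthogonal to the all-ones vector. -/
noncomputable def lam2 {n : ℕ} (L : Matrix (Fin n) (Fin n) ℝ) : ℝ :=
  sInf {t : ℝ | ∃ x : Fin n → ℝ, (∑ i, x i = 0) ∧ (∑ i, (x i) ^ 2 = 1) ∧ t = x ⬝ᵥ (L *ᵥ x)}

/-- Squared Frobenius norm of a real matrix. -/
def frobSq {m m' : Type*} [Fintype m] [Fintype m'] (M : Matrix m m' ℝ) : ℝ :=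
  ∑ i, ∑ j, (M i j) ^ 2

/-- The inner product `⟨A, B⟩ = tr(A Bᵀ)`. -/
def ip {m : Type*} [Fintype m] (A B : Matrix m m ℝ) : ℝ := (A * Bᵀ).trace

/-- Feasibility for the SDP relaxation. -/
def SDPFeasible {n r : ℕ} (X : Matrix (Fin n × Fin r) (Fin n × Fin r) ℝ) : Prop :=
  X.PosSemidef ∧ SBD X = 1

end SyncPaper

namespace SyncPaper


section core

variable {n r p : ℕ}

lemma feas_iff {Y : Matrix (Fin n × Fin r) (Fin p) ℝ} (h : Feasible Y) (i : Fin n) (a b : Fin r) :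
    ∑ c, Y (i, a) c * Y (i, b) c = if a = b then 1 else 0 := by
  have := congrFun (congrFun (h i) a) b
  simpa [Matrix.mul_apply, blk, Matrix.one_apply] using this

/-- traces of the blocks -/
def tt (Y : Matrix (Fin n × Fin r) (Fin p) ℝ) (i j : Fin n) : ℝ :=
  ∑ a, ∑ c, Y (i, a) c * Y (j, a) c

def Xm (Y : Matrix (Fin n × Fin r) (Fin p) ℝ) : Matrix (Fin n × Fin r) (Fin n × Fin r) ℝ :=
  Matrix.of fun q q' => ((p : ℝ) - 2) * (if q.2 = q'.2 then 1 else 0)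
    + tt Y q.1 q'.1 * ∑ c, Y q c * Y q' c

def Yd (Y : Matrix (Fin n × Fin r) (Fin p) ℝ) (a : Fin r) (b : Fin p) :
    Matrix (Fin n × Fin r) (Fin p) ℝ :=
  Matrix.of fun q c => (if q.2 = a then 1 else 0) * (if c = b then 1 else 0)
    - Y q b * Y (q.1, a) c

lemma Yd_tangent {Y : Matrix (Fin n × Fin r) (Fin p) ℝ} (h : Feasible Y) (a : Fin r) (b : Fin p)
    (i : Fin n) :
    blk (Yd Y a b) i * (blk Y i)ᵀ + blk Y i * (blk (Yd Y a b) i)ᵀ = 0 := by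
  ext x y
  simp only [Matrix.add_apply, Matrix.mul_apply, blk, Yd, Matrix.transpose_apply, Matrix.of_apply,
    Matrix.zero_apply, sub_mul, mul_sub, Finset.sum_sub_distrib]
  have h1 : ∑ c, Y (i, x) b * Y (i, a) c * Y (i, y) c = Y (i, x) b * if a = y then 1 else 0 := by
    simp only [mul_assoc]; rw [← Finset.mul_sum, feas_iff h]
  have h2 : ∑ c, Y (i, x) c * (Y (i, y) b * Y (i, a) c) = Y (i, y) b * if x = a then 1 else 0 := by
    rw [← feas_iff h i x a, Finset.mul_sum]
    exact Finset.sum_congr rfl fun c _ => by ring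
  rw [h1, h2]
  by_cases hx : x = a <;> by_cases hy : y = a <;> simp [hx, hy, eq_comm] <;> aesop

lemma Yd_sum {Y : Matrix (Fin n × Fin r) (Fin p) ℝ} (h : Feasible Y) :
    ∑ a, ∑ b, Yd Y a b * (Yd Y a b)ᵀ = Xm Y := by
  ext ⟨i, x⟩ ⟨j, y⟩
  simp only [Matrix.sum_apply, Matrix.mul_apply, Yd, Xm, Matrix.transpose_apply, Matrix.of_apply]
  have e : ∀ a b c, ((if x = a then (1:ℝ) else 0) * (if c = b then 1 else 0) - Y (i, x) b * Y (i, a) c) *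
      ((if y = a then (1:ℝ) else 0) * (if c = b then 1 else 0) - Y (j, y) b * Y (j, a) c)
      = (if x = a then (if y = a then (if c = b then 1 else 0) else 0) else 0)
        - (if x = a then (if c = b then Y (j, y) b * Y (j, a) c else 0) else 0)
        - (if y = a then (if c = b then Y (i, x) b * Y (i, a) c else 0) else 0)
        + (Y (i, x) b * Y (j, y) b) * (Y (i, a) c * Y (j, a) c) := by
    intro a b c
    split_ifs <;> ring
  simp only [e, Finset.sum_add_distrib, Finset.sum_sub_distrib]
  have e1 : ∑ a : Fin r, ∑ b : Fin p, ∑ c : Fin p,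
      (if x = a then (if y = a then (if c = b then (1:ℝ) else 0) else 0) else 0)
      = p * if x = y then 1 else 0 := by
    rw [Finset.sum_eq_single x]
    · by_cases hxy : x = y
      · simp [hxy]
      · simp [hxy, Ne.symm hxy]
    · intro a _ ha; simp [Ne.symm ha]
    · simp
  have e2 : ∑ a : Fin r, ∑ b : Fin p, ∑ c : Fin p,
      (if x = a then (if c = b then Y (j, y) b * Y (j, a) c else 0) else 0)
      = if x = y then 1 else 0 := by
    rw [Finset.sum_eq_single x]
    · simp [feas_iff h, eq_comm]
    · intro a _ ha; simp [Ne.symm ha]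
    · simp
  have e3 : ∑ a : Fin r, ∑ b : Fin p, ∑ c : Fin p,
      (if y = a then (if c = b then Y (i, x) b * Y (i, a) c else 0) else 0)
      = if x = y then 1 else 0 := by
    rw [Finset.sum_eq_single y]
    · simp [feas_iff h, eq_comm]
    · intro a _ ha; simp [Ne.symm ha]
    · simp
  have e4 : ∑ a : Fin r, ∑ b : Fin p, ∑ c : Fin p,
      (Y (i, x) b * Y (j, y) b) * (Y (i, a) c * Y (j, a) c)
      = tt Y i j * ∑ c, Y (i, x) c * Y (j, y) c := by
    simp only [tt, ← Finset.mul_sum, ← Finset.sum_mul]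
    ring
  rw [e1, e2, e3, e4]; ring

lemma tt_self {Y : Matrix (Fin n × Fin r) (Fin p) ℝ} (h : Feasible Y) (i : Fin n) :
    tt Y i i = r := by
  simp [tt, feas_iff h]

lemma Xm_diag {Y : Matrix (Fin n × Fin r) (Fin p) ℝ} (h : Feasible Y) (i : Fin n) (a b : Fin r) :
    Xm Y (i, a) (i, b) = if a = b then ((p:ℝ) + r - 2) else 0 := by
  simp only [Xm, Matrix.of_apply, tt_self h, feas_iff h]
  split_ifs <;> ring

/-- if the diagonal blocks of `X` are `c I`, the SBD pairing is `c tr`. -/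
lemma trace_SBD_mul (M X : Matrix (Fin n × Fin r) (Fin n × Fin r) ℝ) (c : ℝ)
    (hX : ∀ i a b, X (i, a) (i, b) = if a = b then c else 0) :
    (SBD M * X).trace = c * M.trace := by
  simp only [Matrix.trace, Matrix.diag, Matrix.mul_apply, Fintype.sum_prod_type, Finset.mul_sum]
  refine Finset.sum_congr rfl fun i _ => Finset.sum_congr rfl fun a _ => ?_
  rw [Finset.sum_eq_single i]
  · simp [SBD, hX]; ring
  · intro j _ hj; simp [SBD, Ne.symm hj]
  · simp

lemma trace_kron_mul (L : Matrix (Fin n) (Fin n) ℝ) (X : Matrix (Fin n × Fin r) (Fin n × Fin r) ℝ) :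
    ((L ⊗ₖ (1 : Matrix (Fin r) (Fin r) ℝ)) * X).trace = ∑ i, ∑ j, L i j * ∑ a, X (j, a) (i, a) := by
  simp only [Matrix.trace, Matrix.diag, Matrix.mul_apply, Fintype.sum_prod_type, Finset.mul_sum,
    Matrix.kroneckerMap_apply, Matrix.one_apply]
  refine Finset.sum_congr rfl fun i _ => ?_
  rw [Finset.sum_comm]
  refine Finset.sum_congr rfl fun j _ => Finset.sum_congr rfl fun a _ => ?_
  simp

lemma tt_comm (Y : Matrix (Fin n × Fin r) (Fin p) ℝ) (i j : Fin n) : tt Y i j = tt Y j i := by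
  simp only [tt, mul_comm]

lemma core_second (L : Matrix (Fin n) (Fin n) ℝ) 
    (hrow : ∀ i, ∑ j, L i j = 0) (hoff : ∀ i j, i ≠ j → L i j ≤ 0)
    (Δ : Matrix (Fin n × Fin r) (Fin n × Fin r) ℝ)
    (Y : Matrix (Fin n × Fin r) (Fin p) ℝ)
    (hY : IsSecondOrderCritical (L ⊗ₖ (1 : Matrix (Fin r) (Fin r) ℝ) - Δ) Y) :
    ((p : ℝ) - r - 2) * (∑ i, ∑ j, L i j * tt Y i j) ≤
      (Δ * (((p : ℝ) + r - 2) • (Y * Yᵀ) - Xm Y)).trace := by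
  obtain ⟨hf, -, h2⟩ := hY
  set K := L ⊗ₖ (1 : Matrix (Fin r) (Fin r) ℝ) with hK
  have h3 : 0 ≤ (Smat (K - Δ) Y * Xm Y).trace := by
    rw [← Yd_sum hf]
    simp only [Matrix.mul_sum, Matrix.trace_sum]
    refine Finset.sum_nonneg fun a _ => Finset.sum_nonneg fun b _ => ?_
    rw [← Matrix.mul_assoc]
    exact h2 _ (Yd_tangent hf a b)
  rw [Smat, Matrix.sub_mul, Matrix.trace_sub, trace_SBD_mul _ _ _ (Xm_diag hf), Matrix.sub_mul,
    Matrix.mul_assoc, Matrix.sub_mul, Matrix.trace_sub, Matrix.trace_sub, hK, trace_kron_mul,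
    trace_kron_mul] at h3
  rw [Matrix.mul_sub, Matrix.trace_sub, Matrix.mul_smul, Matrix.trace_smul, smul_eq_mul]
  have e1 : ∀ i j, ∑ a, (Y * Yᵀ) (j, a) (i, a) = tt Y i j := by
    intro i j; rw [tt_comm]; simp [tt, Matrix.mul_apply]
  have e2 : ∀ i j, ∑ a, Xm Y (j, a) (i, a) = ((p:ℝ) - 2) * r + tt Y i j ^ 2 := by
    intro i j
    simp only [Xm, Matrix.of_apply, Finset.sum_add_distrib, ← Finset.mul_sum]
    rw [← e1 i j, ← tt_comm, ← e1 i j]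
    simp [Matrix.mul_apply]; ring
  simp only [e1, e2] at h3
  have e3 : ∑ i, ∑ j, L i j * ((r:ℝ) - tt Y i j) ^ 2 ≤ 0 := by
    refine Finset.sum_nonpos fun i _ => Finset.sum_nonpos fun j _ => ?_
    by_cases hij : i = j
    · subst hij; simp [tt_self hf]
    · exact mul_nonpos_of_nonpos_of_nonneg (hoff i j hij) (sq_nonneg _)
  have e4 : ∀ C : ℝ, ∑ i, ∑ j, L i j * C = 0 := by
    intro C; simp [← Finset.sum_mul, hrow]
  have e5 : ∑ i, ∑ j, L i j * ((r:ℝ) - tt Y i j) ^ 2 =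
      ∑ i, ∑ j, L i j * (((p:ℝ) - 2) * r + tt Y i j ^ 2) - 2 * r * ∑ i, ∑ j, L i j * tt Y i j
       + ∑ i, ∑ j, L i j * ((r:ℝ)^2 - ((p:ℝ) - 2) * r) := by
    simp only [Finset.mul_sum, ← Finset.sum_sub_distrib, ← Finset.sum_add_distrib]
    exact Finset.sum_congr rfl fun i _ => Finset.sum_congr rfl fun j _ => by ring
  rw [e4] at e5
  nlinarith [h3, e3, e5]


lemma bilin_bound {ι : Type*} [Fintype ι] (Δ : Matrix ι ι ℝ) (N : ℝ) (hN : 0 ≤ N)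
    (hΔN : ∀ x : ι → ℝ, ∑ q, ((Δ *ᵥ x) q) ^ 2 ≤ N ^ 2 * ∑ q, x q ^ 2) (s : ℝ) (hs : 0 < s)
    (x y : ι → ℝ) :
    x ⬝ᵥ (Δ *ᵥ y) ≤ N * (s / 2 * ∑ q, x q ^ 2 + 1 / (2 * s) * ∑ q, y q ^ 2) := by
  have h := hΔN y
  have hcs : (x ⬝ᵥ (Δ *ᵥ y)) ^ 2 ≤ (∑ q, x q ^ 2) * ∑ q, ((Δ *ᵥ y) q) ^ 2 := by
    simpa [dotProduct] using Finset.sum_mul_sq_le_sq_mul_sq Finset.univ x (Δ *ᵥ y)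
  have hx : 0 ≤ ∑ q, x q ^ 2 := Finset.sum_nonneg fun _ _ => sq_nonneg _
  have hy : 0 ≤ ∑ q, y q ^ 2 := Finset.sum_nonneg fun _ _ => sq_nonneg _
  set a := ∑ q, x q ^ 2
  set b := ∑ q, y q ^ 2
  apply le_trans (le_abs_self _) (abs_le_of_sq_le_sq ?_ ?_)
  · calc _ ≤ a * (N ^ 2 * b) := hcs.trans (by gcongr)
      _ ≤ _ := by
        have : (N * (s / 2 * a + 1 / (2 * s) * b)) ^ 2 - a * (N ^ 2 * b)
          = N ^ 2 * (s / 2 * a - 1 / (2 * s) * b) ^ 2 := by field_simp; ring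
        nlinarith [mul_nonneg (sq_nonneg N) (sq_nonneg (s / 2 * a - 1 / (2 * s) * b))]
  · positivity

lemma quad_bound {ι κ : Type*} [Fintype ι] [Fintype κ] (Δ : Matrix ι ι ℝ) (hsym : Δᵀ = Δ)
    (N : ℝ) (hN : 0 ≤ N)
    (hΔN : ∀ x : ι → ℝ, ∑ q, ((Δ *ᵥ x) q) ^ 2 ≤ N ^ 2 * ∑ q, x q ^ 2) (s : ℝ) (hs : 0 < s)
    (A B : Matrix ι κ ℝ) :
    (Δ * (A * Aᵀ - B * Bᵀ)).trace ≤ N * (s / 2 * ∑ k, ∑ q, (A q k - B q k) ^ 2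
      + 1 / (2 * s) * ∑ k, ∑ q, (A q k + B q k) ^ 2) := by
  have e0 : ∀ C E : Matrix ι κ ℝ, (Δ * (C * Eᵀ)).trace = ∑ k, (fun q => E q k) ⬝ᵥ (Δ *ᵥ fun q => C q k) := by
    intro C E
    rw [← Matrix.mul_assoc, Matrix.trace_mul_comm]
    simp only [Matrix.trace, Matrix.diag, Matrix.mul_apply, dotProduct, Matrix.mulVec,
      Matrix.transpose_apply]
  have e1 : (Δ * (A * Aᵀ - B * Bᵀ)).trace = (Δ * ((A + B) * (A - B)ᵀ)).trace := by
    have h1 : (Δ * (A * Bᵀ)).trace = (Δ * (B * Aᵀ)).trace := by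
      rw [← Matrix.trace_transpose]
      rw [Matrix.transpose_mul, Matrix.transpose_mul, Matrix.transpose_transpose, hsym,
        Matrix.trace_mul_comm]
    rw [Matrix.transpose_sub, Matrix.add_mul, Matrix.mul_sub, Matrix.mul_sub]
    simp only [Matrix.mul_add, Matrix.mul_sub, Matrix.trace_add, Matrix.trace_sub]
    rw [h1]; ring
  rw [e1, e0, Finset.mul_sum, Finset.mul_sum, ← Finset.sum_add_distrib, Finset.mul_sum]
  refine Finset.sum_le_sum fun k _ => ?_
  exact bilin_bound Δ N hN hΔN s hs _ _

lemma sumsq_row {Y : Matrix (Fin n × Fin r) (Fin p) ℝ} (h : Feasible Y) (q : Fin n × Fin r) :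
    ∑ c, Y q c ^ 2 = 1 := by
  have := feas_iff h q.1 q.2 q.2
  simpa [sq] using this

lemma sumsq_sub {Y : Matrix (Fin n × Fin r) (Fin p) ℝ} (h : Feasible Y) (i k : Fin n) :
    ∑ a, ∑ c, (Y (i, a) c - Y (k, a) c) ^ 2 = 2 * r - 2 * tt Y i k := by
  have : ∀ a c, (Y (i, a) c - Y (k, a) c) ^ 2 = Y (i, a) c ^ 2 + Y (k, a) c ^ 2
    - 2 * (Y (i, a) c * Y (k, a) c) := fun a c => by ring
  simp only [this, Finset.sum_add_distrib, Finset.sum_sub_distrib, sumsq_row h, ← Finset.mul_sum, tt]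
  simp; ring

lemma sumsq_add {Y : Matrix (Fin n × Fin r) (Fin p) ℝ} (h : Feasible Y) (i k : Fin n) :
    ∑ a, ∑ c, (Y (i, a) c + Y (k, a) c) ^ 2 ≤ 4 * r := by
  have h1 := sumsq_sub h i k
  have : ∀ a c, (Y (i, a) c + Y (k, a) c) ^ 2 = 2 * (Y (i, a) c ^ 2 + Y (k, a) c ^ 2)
    - (Y (i, a) c - Y (k, a) c) ^ 2 := fun a c => by ring
  have h0 : 0 ≤ ∑ a, ∑ c, (Y (i, a) c - Y (k, a) c) ^ 2 := by positivity
  simp only [this, Finset.sum_add_distrib, Finset.sum_sub_distrib, sumsq_row h, ← Finset.mul_sum]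
  simp; linarith

lemma noise_k {Y : Matrix (Fin n × Fin r) (Fin p) ℝ} (h : Feasible Y) (hp : 2 ≤ p)
    (Δ : Matrix (Fin n × Fin r) (Fin n × Fin r) ℝ) (hsym : Δᵀ = Δ)
    (N : ℝ) (hN : 0 ≤ N)
    (hΔN : ∀ x, ∑ q, ((Δ *ᵥ x) q) ^ 2 ≤ N ^ 2 * ∑ q, x q ^ 2) (s : ℝ) (hs : 0 < s) (k : Fin n) :
    (Δ * (((p : ℝ) + r - 2) • (Y * Yᵀ) - Xm Y)).trace ≤
      N * ((p : ℝ) + r - 2) * (s * (∑ i, (r - tt Y i k)) + 2 * (r * n) / s) := by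
  let F : Matrix (Fin n × Fin r) (Fin p) ℝ := Matrix.of fun q c => Y (k, q.2) c
  let U : Matrix (Fin n × Fin r) ((Fin r × Fin p) × Fin p) ℝ :=
    Matrix.of fun q κ => Y (k, κ.1.1) κ.1.2 * Y q κ.2
  let V : Matrix (Fin n × Fin r) ((Fin r × Fin p) × Fin p) ℝ :=
    Matrix.of fun q κ => Y (q.1, κ.1.1) κ.1.2 * Y q κ.2
  have e : ((p : ℝ) + r - 2) • (Y * Yᵀ) - Xm Y
      = ((p : ℝ) - 2) • (Y * Yᵀ - F * Fᵀ) + (U * Uᵀ - V * Vᵀ) := by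
    ext q q'
    have hF : (F * Fᵀ) q q' = if q.2 = q'.2 then 1 else 0 := by
      rw [← feas_iff h k]; simp [F, Matrix.mul_apply]
    have hU : (U * Uᵀ) q q' = r * (Y * Yᵀ) q q' := by
      rw [← tt_self h k]
      simp only [U, Matrix.mul_apply, Fintype.sum_prod_type, Matrix.of_apply,
        Matrix.transpose_apply, tt, Finset.sum_mul]
      simp only [Finset.mul_sum]
      exact Finset.sum_congr rfl fun _ _ => Finset.sum_congr rfl fun _ _ =>
        Finset.sum_congr rfl fun _ _ => by ring
    have hV : (V * Vᵀ) q q' = tt Y q.1 q'.1 * (Y * Yᵀ) q q' := by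
      simp only [V, Matrix.mul_apply, Fintype.sum_prod_type, Matrix.of_apply,
        Matrix.transpose_apply, tt, Finset.sum_mul]
      simp only [Finset.mul_sum]
      exact Finset.sum_congr rfl fun _ _ => Finset.sum_congr rfl fun _ _ =>
        Finset.sum_congr rfl fun _ _ => by ring
    simp only [Matrix.sub_apply, Matrix.add_apply, Matrix.smul_apply, hF, hU, hV, Xm,
      Matrix.of_apply, smul_eq_mul]
    have : (Y * Yᵀ) q q' = ∑ c, Y q c * Y q' c := by simp [Matrix.mul_apply]
    rw [this]; ring
  rw [e, Matrix.mul_add, Matrix.trace_add, Matrix.mul_smul, Matrix.trace_smul, smul_eq_mul]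
  have b1 := quad_bound Δ hsym N hN hΔN s hs Y F
  have b2 := quad_bound Δ hsym N hN hΔN s hs U V
  have f1 : ∑ c, ∑ q, (Y q c - F q c) ^ 2 = 2 * ∑ i, (r - tt Y i k) := by
    rw [Finset.sum_comm, Fintype.sum_prod_type, Finset.mul_sum]
    refine Finset.sum_congr rfl fun i _ => ?_
    rw [mul_sub, ← sumsq_sub h]; rfl
  have f2 : ∑ c, ∑ q, (Y q c + F q c) ^ 2 ≤ 4 * (r * n) := by
    rw [Finset.sum_comm, Fintype.sum_prod_type]
    calc _ ≤ ∑ i : Fin n, (4 * r : ℝ) := Finset.sum_le_sum fun i _ => sumsq_add h i k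
      _ = _ := by simp; ring
  have f3 : ∑ κ, ∑ q, (U q κ - V q κ) ^ 2 = r * (2 * ∑ i, (r - tt Y i k)) := by
    rw [Finset.sum_comm, Fintype.sum_prod_type, Finset.mul_sum, Finset.mul_sum]
    refine Finset.sum_congr rfl fun i _ => ?_
    rw [mul_sub, ← sumsq_sub h]
    have : ∀ a : Fin r, ∑ κ, (U (i, a) κ - V (i, a) κ) ^ 2
        = ∑ a, ∑ c, (Y (i, a) c - Y (k, a) c) ^ 2 := by
      intro a
      simp only [U, V, Matrix.of_apply, Fintype.sum_prod_type]
      refine Finset.sum_congr rfl fun b _ => Finset.sum_congr rfl fun c _ => ?_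
      simp only [← sub_mul, mul_pow, ← Finset.mul_sum, sumsq_row h]; ring
    simp [this]
  have f4 : ∑ κ, ∑ q, (U q κ + V q κ) ^ 2 ≤ r * (4 * (r * n)) := by
    rw [Finset.sum_comm, Fintype.sum_prod_type]
    have : ∀ i, ∀ a : Fin r, ∑ κ, (U (i, a) κ + V (i, a) κ) ^ 2
        = ∑ a, ∑ c, (Y (i, a) c + Y (k, a) c) ^ 2 := by
      intro i a
      simp only [U, V, Matrix.of_apply, Fintype.sum_prod_type]
      refine Finset.sum_congr rfl fun b _ => Finset.sum_congr rfl fun c _ => ?_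
      simp only [← add_mul, mul_pow, ← Finset.mul_sum, sumsq_row h]; ring
    simp only [this]
    calc _ ≤ ∑ i : Fin n, ∑ a : Fin r, (4 * r : ℝ) :=
          Finset.sum_le_sum fun i _ => Finset.sum_le_sum fun a _ => sumsq_add h i k
      _ = _ := by simp; ring
  rw [f1] at b1
  rw [f3] at b2
  have hp2 : (0:ℝ) ≤ (p:ℝ) - 2 := by
    have : (2:ℝ) ≤ p := by exact_mod_cast hp
    linarith
  set w := ∑ i, (r - tt Y i k)
  have b1' : (Δ * (Y * Yᵀ - F * Fᵀ)).trace ≤ N * (s / 2 * (2 * w) + 1 / (2 * s) * (4 * (r * n))) :=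
    b1.trans (by gcongr)
  have b2' : (Δ * (U * Uᵀ - V * Vᵀ)).trace ≤
      N * (s / 2 * (r * (2 * w)) + 1 / (2 * s) * (r * (4 * (r * n)))) :=
    b2.trans (by gcongr)
  calc _ ≤ ((p:ℝ) - 2) * (N * (s / 2 * (2 * w) + 1 / (2 * s) * (4 * (r * n)))) +
      N * (s / 2 * (r * (2 * w)) + 1 / (2 * s) * (r * (4 * (r * n)))) := by gcongr
    _ = _ := by field_simp; ring

/-- shifted Poincare inequality -/
lemma poincare (L : Matrix (Fin n) (Fin n) ℝ) (hLs : Lᵀ = L) (hn : 1 ≤ n)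
    (hrow : ∀ i, ∑ j, L i j = 0) (lam : ℝ)
    (hlam : ∀ x : Fin n → ℝ, ∑ i, x i = 0 → lam * ∑ i, x i ^ 2 ≤ ∑ i, ∑ j, L i j * (x i * x j))
    (x : Fin n → ℝ) :
    lam * (n * ∑ i, x i ^ 2 - (∑ i, x i) ^ 2) ≤ n * ∑ i, ∑ j, L i j * (x i * x j) := by
  have hn0 : (0:ℝ) < n := by exact_mod_cast hn
  set m := (∑ i, x i) / n with hm
  have hm' : ∑ i, x i = n * m := by rw [hm]; field_simp
  have h := hlam (fun i => x i - m) (by simp [hm'])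
  have hcol : ∀ j, ∑ i, L i j = 0 := by
    intro j; rw [← hrow j]
    exact Finset.sum_congr rfl fun i _ => congrFun (congrFun hLs j) i
  have e1 : ∑ i, (x i - m) ^ 2 = ∑ i, x i ^ 2 - n * m ^ 2 := by
    have : ∀ i, (x i - m) ^ 2 = x i ^ 2 - 2 * m * x i + m ^ 2 := fun i => by ring
    simp only [this, Finset.sum_add_distrib, Finset.sum_sub_distrib, ← Finset.mul_sum, hm']
    simp; ring
  have e2 : ∑ i, ∑ j, L i j * ((x i - m) * (x j - m)) = ∑ i, ∑ j, L i j * (x i * x j) := by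
    have : ∀ i j, L i j * ((x i - m) * (x j - m)) = L i j * (x i * x j) - (L i j) * (m * x i)
      - (L i j * (m * x j)) + L i j * m ^ 2 := fun i j => by ring
    simp only [this, Finset.sum_add_distrib, Finset.sum_sub_distrib]
    have z1 : ∑ i, ∑ j, L i j * (m * x i) = 0 := by simp [← Finset.sum_mul, hrow]
    have z2 : ∑ i, ∑ j, L i j * (m * x j) = 0 := by
      rw [Finset.sum_comm]; simp [← Finset.sum_mul, hcol]
    have z3 : ∑ i, ∑ j, L i j * m ^ 2 = 0 := by simp [← Finset.sum_mul, hrow]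
    rw [z1, z2, z3]; ring
  simp only [e1, e2] at h
  have := mul_le_mul_of_nonneg_left h hn0.le
  rw [hm']
  calc _ = n * (lam * (∑ i, x i ^ 2 - n * m ^ 2)) := by ring
    _ ≤ _ := this

lemma gap (L : Matrix (Fin n) (Fin n) ℝ) (hLs : Lᵀ = L) (hn : 1 ≤ n)
    (hrow : ∀ i, ∑ j, L i j = 0) (lam : ℝ)
    (hlam : ∀ x : Fin n → ℝ, ∑ i, x i = 0 → lam * ∑ i, x i ^ 2 ≤ ∑ i, ∑ j, L i j * (x i * x j))
    {Y : Matrix (Fin n × Fin r) (Fin p) ℝ} (h : Feasible Y) :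
    lam * (∑ k, ∑ i, (r - tt Y i k)) ≤ n * ∑ i, ∑ j, L i j * tt Y i j := by
  have key : ∑ a : Fin r, ∑ c, lam * (n * ∑ i, Y (i, a) c ^ 2 - (∑ i, Y (i, a) c) ^ 2) ≤
      ∑ a : Fin r, ∑ c, n * ∑ i, ∑ j, L i j * (Y (i, a) c * Y (j, a) c) :=
    Finset.sum_le_sum fun a _ => Finset.sum_le_sum fun c _ =>
      poincare L hLs hn hrow lam hlam (fun i => Y (i, a) c)
  have swap : ∀ f : Fin r → Fin p → Fin n → Fin n → ℝ,
      ∑ a, ∑ c, ∑ i, ∑ j, f a c i j = ∑ i, ∑ j, ∑ a, ∑ c, f a c i j := by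
    intro f
    have h1 : ∀ a, ∑ c, ∑ i, ∑ j, f a c i j = ∑ i, ∑ j, ∑ c, f a c i j := by
      intro a
      rw [Finset.sum_comm]
      exact Finset.sum_congr rfl fun i _ => Finset.sum_comm
    simp only [h1]
    rw [Finset.sum_comm]
    exact Finset.sum_congr rfl fun i _ => Finset.sum_comm
  have e1 : ∑ a : Fin r, ∑ c, n * ∑ i, ∑ j, L i j * (Y (i, a) c * Y (j, a) c)
      = n * ∑ i, ∑ j, L i j * tt Y i j := by
    simp only [← Finset.mul_sum]
    rw [swap]
    simp only [tt, Finset.mul_sum]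
  have e2 : ∑ a : Fin r, ∑ c, lam * (n * ∑ i, Y (i, a) c ^ 2 - (∑ i, Y (i, a) c) ^ 2)
      = lam * (∑ k, ∑ i, (r - tt Y i k)) := by
    simp only [← Finset.mul_sum]
    congr 1
    have : ∀ (a : Fin r) c, (n * ∑ i, Y (i, a) c ^ 2 - (∑ i, Y (i, a) c) ^ 2)
      = ∑ k, ∑ i, (Y (i, a) c ^ 2 - Y (i, a) c * Y (k, a) c) := by
      intro a c
      simp only [Finset.sum_sub_distrib, sq (∑ i, Y (i, a) c), Finset.sum_mul, Finset.mul_sum]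
      simp [Finset.mul_sum]
    simp only [this]
    rw [swap]
    refine Finset.sum_congr rfl fun k _ => Finset.sum_congr rfl fun i _ => ?_
    simp only [Finset.sum_sub_distrib, sumsq_row h, tt]
    simp
  rw [e1, e2] at key
  exact key

/-- Main bound on the objective. -/
lemma ell_bound (L : Matrix (Fin n) (Fin n) ℝ) (hLs : Lᵀ = L) (hn : 1 ≤ n) (hp : r + 2 < p)
    (hrow : ∀ i, ∑ j, L i j = 0) (hoff : ∀ i j, i ≠ j → L i j ≤ 0) (lam : ℝ) (hlam0 : 0 < lam)
    (hlam : ∀ x : Fin n → ℝ, ∑ i, x i = 0 → lam * ∑ i, x i ^ 2 ≤ ∑ i, ∑ j, L i j * (x i * x j))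
    (Δ : Matrix (Fin n × Fin r) (Fin n × Fin r) ℝ) (hsym : Δᵀ = Δ)
    (N : ℝ) (hN : 0 ≤ N)
    (hΔN : ∀ x, ∑ q, ((Δ *ᵥ x) q) ^ 2 ≤ N ^ 2 * ∑ q, x q ^ 2)
    (Y : Matrix (Fin n × Fin r) (Fin p) ℝ)
    (hY : IsSecondOrderCritical (L ⊗ₖ (1 : Matrix (Fin r) (Fin r) ℝ) - Δ) Y) :
    (∑ i, ∑ j, L i j * tt Y i j) ≤
      2 * (2 * ((p : ℝ) + r - 2) / ((p : ℝ) - r - 2) * (N / lam)) ^ 2 * lam * (r * n) := by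
  have h1 := core_second L hrow hoff Δ Y hY
  have hf := hY.1
  have hg := gap L hLs hn hrow lam hlam hf
  have hn0 : (0:ℝ) < n := by exact_mod_cast hn
  have hpr : (0:ℝ) < (p:ℝ) - r - 2 := by
    have : (r:ℝ) + 2 < p := by exact_mod_cast hp
    linarith
  have hc : (0:ℝ) < (p:ℝ) + r - 2 := by
    have : (0:ℝ) ≤ r := Nat.cast_nonneg r
    linarith
  set ℓ := ∑ i, ∑ j, L i j * tt Y i j
  set w := ∑ k, ∑ i, (r - tt Y i k) with hw
  set c := (p:ℝ) + r - 2
  set e := (p:ℝ) - r - 2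
  have h2 : ∀ s : ℝ, 0 < s → n * (e * ℓ) ≤ N * c * (s * w + n * (2 * (r * n) / s)) := by
    intro s hs
    have : ∑ k : Fin n, e * ℓ ≤ ∑ k : Fin n, N * c * (s * (∑ i, (r - tt Y i k)) + 2 * (r * n) / s) :=
      Finset.sum_le_sum fun k _ => h1.trans (noise_k hf (by omega) Δ hsym N hN hΔN s hs k)
    rw [Finset.sum_const, ← Finset.mul_sum, Finset.sum_add_distrib, ← Finset.mul_sum, ← hw] at this
    simpa using this
  rcases hN.eq_or_lt with h0 | hN0
  · have := h2 1 one_pos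
    rw [← h0] at this
    have h3 : ℓ ≤ 0 := by
      by_contra hcon
      push Not at hcon
      have : 0 < n * (e * ℓ) := by positivity
      linarith
    simpa [← h0] using h3
  · have hs : 0 < e * lam / (2 * c * N) := by positivity
    have h3 := h2 _ hs
    have h4 : N * c * (e * lam / (2 * c * N) * w) ≤ e / 2 * (n * ℓ) := by
      calc _ = e / 2 * (lam * w) := by field_simp
        _ ≤ _ := by gcongr
    have h5 : n * (e / 2 * ℓ) ≤ n * (N * c * (2 * (r * n) / (e * lam / (2 * c * N)))) := by
      nlinarith [h3, h4]
    have h6 := le_of_mul_le_mul_left h5 hn0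
    have h7 : e / 2 * ℓ ≤ e / 2 * (2 * (2 * c / e * (N / lam)) ^ 2 * lam * (r * n)) := by
      refine h6.trans (le_of_eq ?_)
      field_simp
    exact le_of_mul_le_mul_left h7 (by positivity)

lemma norm_block {Y : Matrix (Fin n × Fin r) (Fin p) ℝ} (h : Feasible Y) (j : Fin n)
    (u : Fin r → ℝ) : ∑ c, (∑ a, Y (j, a) c * u a) ^ 2 = ∑ a, u a ^ 2 := by
  have e : ∀ c, (∑ a, Y (j, a) c * u a) ^ 2 = ∑ a, ∑ b, (u a * u b) * (Y (j, a) c * Y (j, b) c) := by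
    intro c
    rw [sq, Finset.sum_mul_sum]
    exact Finset.sum_congr rfl fun a _ => Finset.sum_congr rfl fun b _ => by ring
  simp only [e]
  rw [Finset.sum_comm]
  refine Finset.sum_congr rfl fun a _ => ?_
  rw [Finset.sum_comm]
  simp only [← Finset.mul_sum, feas_iff h]
  simp [sq]

lemma form_SBD (W Y : Matrix (Fin n × Fin r) (Fin p) ℝ) (x : Fin n × Fin r → ℝ) :
    x ⬝ᵥ (SBD (W * Yᵀ) *ᵥ x)
      = ∑ i, ∑ c, (∑ a, W (i, a) c * x (i, a)) * (∑ a, Y (i, a) c * x (i, a)) := by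
  simp only [dotProduct, Matrix.mulVec, Fintype.sum_prod_type]
  refine Finset.sum_congr rfl fun i _ => ?_
  have e1 : ∀ a, ∑ j, ∑ b, SBD (W * Yᵀ) (i, a) (j, b) * x (j, b)
      = ∑ b, ((W * Yᵀ) (i, a) (i, b) + (W * Yᵀ) (i, b) (i, a)) / 2 * x (i, b) := by
    intro a
    rw [Finset.sum_eq_single i]
    · simp [SBD]
    · intro j _ hj; simp [SBD, Ne.symm hj]
    · simp
  simp only [e1]
  have e2 : ∑ a, ∑ b, x (i, a) * ((W * Yᵀ) (i, a) (i, b) * x (i, b)) =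
      ∑ c, (∑ a, W (i, a) c * x (i, a)) * (∑ a, Y (i, a) c * x (i, a)) := by
    simp only [Matrix.mul_apply, Matrix.transpose_apply, Finset.sum_mul,
      Finset.mul_sum]
    have : ∀ a, ∑ b, ∑ c, x (i, a) * (W (i, a) c * Y (i, b) c * x (i, b))
      = ∑ c, ∑ b, x (i, a) * (W (i, a) c * Y (i, b) c * x (i, b)) := fun a => Finset.sum_comm
    simp only [this]
    rw [Finset.sum_comm]
    refine Finset.sum_congr rfl fun c _ => ?_
    rw [Finset.sum_comm]
    exact Finset.sum_congr rfl fun a _ =>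
      Finset.sum_congr rfl fun b _ => by ring
  have e3 : ∑ a, ∑ b, x (i, a) * ((W * Yᵀ) (i, b) (i, a) * x (i, b)) =
      ∑ a, ∑ b, x (i, a) * ((W * Yᵀ) (i, a) (i, b) * x (i, b)) := by
    rw [Finset.sum_comm]
    exact Finset.sum_congr rfl fun a _ => Finset.sum_congr rfl fun b _ => by ring
  have e4 : ∑ a, x (i, a) * ∑ b, ((W * Yᵀ) (i, a) (i, b) + (W * Yᵀ) (i, b) (i, a)) / 2 * x (i, b)
    = (∑ a, ∑ b, x (i, a) * ((W * Yᵀ) (i, a) (i, b) * x (i, b)) +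
      ∑ a, ∑ b, x (i, a) * ((W * Yᵀ) (i, b) (i, a) * x (i, b))) / 2 := by
    simp only [← Finset.sum_add_distrib, Finset.mul_sum, Finset.sum_div]
    exact Finset.sum_congr rfl fun a _ => Finset.sum_congr rfl fun b _ => by ring
  rw [e4, e3, e2]; ring

lemma form_BL (L : Matrix (Fin n) (Fin n) ℝ) (hrow : ∀ i, ∑ j, L i j = 0)
    {Y : Matrix (Fin n × Fin r) (Fin p) ℝ} (h : Feasible Y) (x : Fin n × Fin r → ℝ) :
    x ⬝ᵥ (SBD ((L ⊗ₖ (1 : Matrix (Fin r) (Fin r) ℝ)) * Y * Yᵀ) *ᵥ x)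
      = ∑ i, ∑ j, (-L i j / 2) * ∑ c, (∑ a, (Y (i, a) c - Y (j, a) c) * x (i, a)) ^ 2 := by
  rw [form_SBD]
  refine Finset.sum_congr rfl fun i _ => ?_
  have hW : ∀ a c, ((L ⊗ₖ (1 : Matrix (Fin r) (Fin r) ℝ)) * Y) (i, a) c = ∑ j, L i j * Y (j, a) c := by
    intro a c
    simp only [Matrix.mul_apply, Fintype.sum_prod_type, Matrix.kroneckerMap_apply, Matrix.one_apply]
    exact Finset.sum_congr rfl fun j _ => by simp
  have hW2 : ∀ c, ∑ a, ((L ⊗ₖ (1 : Matrix (Fin r) (Fin r) ℝ)) * Y) (i, a) c * x (i, a)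
      = ∑ j, L i j * ∑ a, Y (j, a) c * x (i, a) := by
    intro c
    simp only [hW, Finset.sum_mul, Finset.mul_sum]
    rw [Finset.sum_comm]
    exact Finset.sum_congr rfl fun j _ => Finset.sum_congr rfl fun a _ => by ring
  simp only [hW2, sub_mul, Finset.sum_sub_distrib]
  have hsq : ∀ j, ∑ c, (∑ a, Y (i, a) c * x (i, a) - ∑ a, Y (j, a) c * x (i, a)) ^ 2
     = 2 * (∑ a, x (i, a) ^ 2) - 2 * ∑ c, (∑ a, Y (j, a) c * x (i, a)) * (∑ a, Y (i, a) c * x (i, a)) := by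
    intro j
    have h1 := norm_block h i (fun a => x (i, a))
    have h2 := norm_block h j (fun a => x (i, a))
    have h3 : ∀ c, (∑ a, Y (i, a) c * x (i, a) - ∑ a, Y (j, a) c * x (i, a)) ^ 2
      = (∑ a, Y (i, a) c * x (i, a)) ^ 2 + (∑ a, Y (j, a) c * x (i, a)) ^ 2
        - 2 * ((∑ a, Y (j, a) c * x (i, a)) * (∑ a, Y (i, a) c * x (i, a))) := fun c => by ring
    simp only [h3, Finset.sum_sub_distrib, Finset.sum_add_distrib, ← Finset.mul_sum, h1, h2]
    ring
  simp only [hsq]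
  have e1 : ∀ j, -L i j / 2 * (2 * (∑ a, x (i, a) ^ 2) - 2 * ∑ c, (∑ a, Y (j, a) c * x (i, a)) * (∑ a, Y (i, a) c * x (i, a)))
     = L i j * (∑ c, (∑ a, Y (j, a) c * x (i, a)) * (∑ a, Y (i, a) c * x (i, a))) - L i j * (∑ a, x (i, a) ^ 2) :=
    fun j => by ring
  simp only [e1, Finset.sum_sub_distrib, ← Finset.sum_mul, hrow, zero_mul, sub_zero]
  simp only [Finset.mul_sum (Finset.univ : Finset (Fin p)), Finset.sum_mul (Finset.univ : Finset (Fin n))]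
  rw [Finset.sum_comm]
  exact Finset.sum_congr rfl fun j _ => Finset.sum_congr rfl fun a _ => by ring

lemma SBD_sub (M M' : Matrix (Fin n × Fin r) (Fin n × Fin r) ℝ) : SBD (M - M') = SBD M - SBD M' := by
  ext q q'
  simp only [SBD, Matrix.of_apply, Matrix.sub_apply]
  split_ifs <;> ring

lemma pointwise (L : Matrix (Fin n) (Fin n) ℝ)
    (hrow : ∀ i, ∑ j, L i j = 0) (lam : ℝ)
    (hlam : ∀ x : Fin n → ℝ, ∑ i, x i = 0 → lam * ∑ i, x i ^ 2 ≤ ∑ i, ∑ j, L i j * (x i * x j))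
    (Δ : Matrix (Fin n × Fin r) (Fin n × Fin r) ℝ)
    (N : ℝ) (hN : 0 ≤ N)
    (hΔN : ∀ x, ∑ q, ((Δ *ᵥ x) q) ^ 2 ≤ N ^ 2 * ∑ q, x q ^ 2)
    (Y : Matrix (Fin n × Fin r) (Fin p) ℝ) (hf : Feasible Y)
    (hY : Smat (L ⊗ₖ (1 : Matrix (Fin r) (Fin r) ℝ) - Δ) Y * Y = 0)
    (ε : ℝ) (hε : 0 < ε) (v : Fin p → ℝ) (x : Fin n × Fin r → ℝ) (hx : x = Y *ᵥ v)
    (hx0 : ∀ a, ∑ i, x (i, a) = 0) :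
    (lam - N - ε / 2) * ∑ q, x q ^ 2 ≤
      ∑ i, ∑ j, (-L i j / 2) * ∑ c, (∑ a, (Y (i, a) c - Y (j, a) c) * x (i, a)) ^ 2
      + 1 / (2 * ε) * ∑ i, ∑ c, (∑ a, (Δ * Y) (i, a) c * x (i, a)) ^ 2 := by
  have h0 : x ⬝ᵥ (Smat (L ⊗ₖ (1 : Matrix (Fin r) (Fin r) ℝ) - Δ) Y *ᵥ x) = 0 := by
    conv_lhs => rw [hx]
    rw [Matrix.mulVec_mulVec, hY]; simp
  rw [Smat, Matrix.sub_mul, Matrix.sub_mul, SBD_sub, Matrix.sub_mulVec, Matrix.sub_mulVec,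
    Matrix.sub_mulVec, dotProduct_sub, dotProduct_sub, dotProduct_sub, form_BL L hrow hf,
    form_SBD] at h0
  have h1 := bilin_bound Δ N hN hΔN 1 one_pos x x
  have h2 : lam * ∑ q, x q ^ 2 ≤ x ⬝ᵥ ((L ⊗ₖ (1 : Matrix (Fin r) (Fin r) ℝ)) *ᵥ x) := by
    have e : x ⬝ᵥ ((L ⊗ₖ (1 : Matrix (Fin r) (Fin r) ℝ)) *ᵥ x)
        = ∑ a, ∑ i, ∑ j, L i j * (x (i, a) * x (j, a)) := by
      simp only [dotProduct, Matrix.mulVec, Fintype.sum_prod_type, Matrix.kroneckerMap_apply,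
        Matrix.one_apply]
      rw [Finset.sum_comm]
      refine Finset.sum_congr rfl fun a _ => Finset.sum_congr rfl fun i _ => ?_
      rw [Finset.mul_sum]
      refine Finset.sum_congr rfl fun j _ => ?_
      simp; ring
    rw [e, Fintype.sum_prod_type, Finset.sum_comm, Finset.mul_sum]
    exact Finset.sum_le_sum fun a _ => hlam (fun i => x (i, a)) (hx0 a)
  have h3 : -∑ i, ∑ c, (∑ a, (Δ * Y) (i, a) c * x (i, a)) * (∑ a, Y (i, a) c * x (i, a))
      ≤ ε / 2 * ∑ q, x q ^ 2 + 1 / (2 * ε) * ∑ i, ∑ c, (∑ a, (Δ * Y) (i, a) c * x (i, a)) ^ 2 := by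
    have e : ∑ q, x q ^ 2 = ∑ i, ∑ c, (∑ a, Y (i, a) c * x (i, a)) ^ 2 := by
      rw [Fintype.sum_prod_type]
      exact Finset.sum_congr rfl fun i _ => (norm_block hf i (fun a => x (i, a))).symm
    rw [e]
    simp only [Finset.mul_sum (Finset.univ : Finset (Fin p)), Finset.mul_sum (Finset.univ : Finset (Fin n)), ← Finset.sum_neg_distrib, ← Finset.sum_add_distrib]
    refine Finset.sum_le_sum fun i _ => Finset.sum_le_sum fun c _ => ?_
    set A := ∑ a, (Δ * Y) (i, a) c * x (i, a)
    set B := ∑ a, Y (i, a) c * x (i, a)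
    have : ε / 2 * B ^ 2 + 1 / (2 * ε) * A ^ 2 + A * B = 1 / (2 * ε) * (ε * B + A) ^ 2 := by
      field_simp; ring
    have : 0 ≤ 1 / (2 * ε) * (ε * B + A) ^ 2 := by positivity
    linarith
  have h4 : x ⬝ᵥ (Δ *ᵥ x) ≤ N * ∑ q, x q ^ 2 := h1.trans (le_of_eq (by ring))
  linarith

lemma bessel_blk {ι : Type*} [Fintype ι] (u : ι → EuclideanSpace ℝ (Fin n × Fin r))
    (hu : Orthonormal ℝ u) (i : Fin n) (v : Fin r → ℝ) :
    ∑ k, (∑ a, v a * u k (i, a)) ^ 2 ≤ ∑ a, v a ^ 2 := by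
  let b : EuclideanSpace ℝ (Fin n × Fin r) := WithLp.toLp 2 fun q => if q.1 = i then v q.2 else 0
  have h := hu.sum_inner_products_le b (s := Finset.univ)
  have e1 : ‖b‖ ^ 2 = ∑ a, v a ^ 2 := by
    rw [EuclideanSpace.norm_sq_eq, Fintype.sum_prod_type, Finset.sum_eq_single i]
    · simp [b]
    · intro j _ hj; simp [b, hj]
    · simp
  have e2 : ∀ k, inner ℝ (u k) b = ∑ a, v a * u k (i, a) := by
    intro k
    rw [PiLp.inner_apply, Fintype.sum_prod_type, Finset.sum_eq_single i]
    · simp [b]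
    · intro j _ hj; simp [b, hj]
    · simp
  simpa [e1, e2] using h

lemma exists_onb (Y : Matrix (Fin n × Fin r) (Fin p) ℝ) :
    ∃ (d : ℕ) (u : Fin d → EuclideanSpace ℝ (Fin n × Fin r)), Orthonormal ℝ u ∧
      Y.rank ≤ d + r ∧ ∀ k, (∃ v, (fun q => u k q) = Y *ᵥ v) ∧ ∀ a, ∑ i, u k (i, a) = 0 := by
  let e := WithLp.linearEquiv 2 ℝ (Fin n × Fin r → ℝ)
  let R : Submodule ℝ (EuclideanSpace ℝ (Fin n × Fin r)) :=
    (LinearMap.range Y.mulVecLin).map e.symm.toLinearMap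
  let f : EuclideanSpace ℝ (Fin n × Fin r) →ₗ[ℝ] (Fin r → ℝ) :=
    { toFun := fun x a => ∑ i, x (i, a)
      map_add' := by intro x y; ext a; simp [Finset.sum_add_distrib]
      map_smul' := by intro c x; ext a; simp [Finset.mul_sum] }
  let K := R ⊓ LinearMap.ker f
  let b := stdOrthonormalBasis ℝ K
  refine ⟨_, fun k => (b k : EuclideanSpace ℝ (Fin n × Fin r)), ?_, ?_, ?_⟩
  · exact b.orthonormal.comp_linearIsometry K.subtypeₗᵢ
  · have h1 : Module.finrank ℝ R = Y.rank := LinearEquiv.finrank_map_eq e.symm _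
    have h2 := LinearMap.finrank_range_add_finrank_ker f
    have h3 : Module.finrank ℝ (LinearMap.range f) ≤ r := by
      simpa using Submodule.finrank_le (LinearMap.range f)
    have h4 := Submodule.finrank_sup_add_finrank_inf_eq R (LinearMap.ker f)
    have h5 := Submodule.finrank_le (R ⊔ LinearMap.ker f)
    change _ ≤ Module.finrank ℝ (R ⊓ LinearMap.ker f : Submodule ℝ _) + r
    omega
  · intro k
    obtain ⟨⟨y, ⟨v, hv⟩, hy⟩, hk⟩ := (b k).2
    refine ⟨⟨v, ?_⟩, fun a => congrFun (LinearMap.mem_ker.1 hk) a⟩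
    change (fun q => (b k : EuclideanSpace ℝ (Fin n × Fin r)) q) = Y *ᵥ v
    rw [← hy, ← hv]
    rfl

lemma rank_core (L : Matrix (Fin n) (Fin n) ℝ) (hLs : Lᵀ = L) (hn : 1 ≤ n) (hr : 1 ≤ r)
    (hp : r + 2 < p)
    (hrow : ∀ i, ∑ j, L i j = 0) (hoff : ∀ i j, i ≠ j → L i j ≤ 0) (lam : ℝ) (hlam0 : 0 < lam)
    (hlam : ∀ x : Fin n → ℝ, ∑ i, x i = 0 → lam * ∑ i, x i ^ 2 ≤ ∑ i, ∑ j, L i j * (x i * x j))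
    (Δ : Matrix (Fin n × Fin r) (Fin n × Fin r) ℝ) (hsym : Δᵀ = Δ)
    (N : ℝ) (hN : 0 ≤ N)
    (hΔN : ∀ x, ∑ q, ((Δ *ᵥ x) q) ^ 2 ≤ N ^ 2 * ∑ q, x q ^ 2)
    (Y : Matrix (Fin n × Fin r) (Fin p) ℝ)
    (hY : IsSecondOrderCritical (L ⊗ₖ (1 : Matrix (Fin r) (Fin r) ℝ) - Δ) Y) :
    (Y.rank : ℝ) ≤ r + 5 * (2 * ((p : ℝ) + r - 2) / ((p : ℝ) - r - 2)) ^ 2 * (N / lam) ^ 2 * (r * n) := by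
  have hell := ell_bound L hLs hn hp hrow hoff lam hlam0 hlam Δ hsym N hN hΔN Y hY
  obtain ⟨hf, hS, -⟩ := hY
  have hpr : (0:ℝ) < (p:ℝ) - r - 2 := by
    have : (r:ℝ) + 2 < p := by exact_mod_cast hp
    linarith
  have hC : 2 ≤ 2 * ((p : ℝ) + r - 2) / ((p : ℝ) - r - 2) := by
    rw [le_div_iff₀ hpr]
    have : (0:ℝ) ≤ r := Nat.cast_nonneg r
    linarith
  set C := 2 * ((p : ℝ) + r - 2) / ((p : ℝ) - r - 2)
  obtain ⟨d, u, hu, hd, hk⟩ := exists_onb Y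
  have hd' : (Y.rank : ℝ) ≤ d + r := by exact_mod_cast hd
  have hdn : (d : ℝ) ≤ r * n := by
    have := hu.linearIndependent.fintype_card_le_finrank
    simp at this
    rw [mul_comm]
    exact_mod_cast this
  have hunit : ∀ k, ∑ q, u k q ^ 2 = 1 := by
    intro k
    have := hu.1 k
    have h2 := EuclideanSpace.norm_sq_eq (u k)
    rw [this] at h2
    simpa using h2.symm
  have hpt : ∀ k, (lam - N - (lam / 4) / 2) ≤
      ∑ i, ∑ j, (-L i j / 2) * ∑ c, (∑ a, (Y (i, a) c - Y (j, a) c) * u k (i, a)) ^ 2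
      + 1 / (2 * (lam / 4)) * ∑ i, ∑ c, (∑ a, (Δ * Y) (i, a) c * u k (i, a)) ^ 2 := by
    intro k
    obtain ⟨⟨v, hv⟩, h0⟩ := hk k
    have := pointwise L hrow lam hlam Δ N hN hΔN Y hf hS (lam / 4) (by positivity) v
      (fun q => u k q) hv h0
    rw [hunit k, mul_one] at this
    exact this
  have hsum := Finset.sum_le_sum fun k (_ : k ∈ (Finset.univ : Finset (Fin d))) => hpt k
  rw [Finset.sum_add_distrib, ← Finset.mul_sum] at hsum
  have hA : ∑ k : Fin d, ∑ i, ∑ j, (-L i j / 2) * ∑ c, (∑ a, (Y (i, a) c - Y (j, a) c) * u k (i, a)) ^ 2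
      ≤ ∑ i, ∑ j, L i j * tt Y i j := by
    have e : ∑ i, ∑ j, L i j * tt Y i j = ∑ i, ∑ j, (-L i j / 2) * (2 * r - 2 * tt Y i j) := by
      have : ∀ i j, (-L i j / 2) * (2 * r - 2 * tt Y i j) = L i j * tt Y i j - L i j * r :=
        fun i j => by ring
      simp only [this, Finset.sum_sub_distrib, ← Finset.sum_mul, hrow]
      simp
    rw [e, Finset.sum_comm]
    refine Finset.sum_le_sum fun i _ => ?_
    rw [Finset.sum_comm]
    refine Finset.sum_le_sum fun j _ => ?_
    rw [← Finset.mul_sum]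
    by_cases hij : i = j
    · subst hij; simp [tt_self hf]
    · refine mul_le_mul_of_nonneg_left ?_ (by have := hoff i j hij; linarith)
      rw [← sumsq_sub hf, Finset.sum_comm, Finset.sum_comm (s := (Finset.univ : Finset (Fin r)))]
      exact Finset.sum_le_sum fun c _ => bessel_blk u hu i _
  have hB : ∑ k : Fin d, ∑ i, ∑ c, (∑ a, (Δ * Y) (i, a) c * u k (i, a)) ^ 2 ≤ N ^ 2 * (r * n) := by
    calc _ ≤ ∑ i, ∑ c, ∑ a, (Δ * Y) (i, a) c ^ 2 := by
          rw [Finset.sum_comm]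
          refine Finset.sum_le_sum fun i _ => ?_
          rw [Finset.sum_comm]
          exact Finset.sum_le_sum fun c _ => bessel_blk u hu i _
      _ = ∑ c, ∑ q, (Δ *ᵥ fun q => Y q c) q ^ 2 := by
          rw [Finset.sum_comm]
          refine Finset.sum_congr rfl fun c _ => ?_
          rw [Fintype.sum_prod_type]; rfl
      _ ≤ ∑ c, N ^ 2 * ∑ q, Y q c ^ 2 := Finset.sum_le_sum fun c _ => hΔN _
      _ = N ^ 2 * (r * n) := by
          rw [← Finset.mul_sum, Finset.sum_comm]
          simp [sumsq_row hf, mul_comm]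
  simp only [Finset.sum_const, Finset.card_univ, Fintype.card_fin, nsmul_eq_mul] at hsum
  set δ := N / lam with hδ
  have hNδ : N = δ * lam := by rw [hδ]; field_simp
  have hδ0 : 0 ≤ δ := by positivity
  have hmain : (d : ℝ) * (7 / 8 - δ) ≤ 2 * (C * δ) ^ 2 * (r * n) + 2 * δ ^ 2 * (r * n) := by
    have h1 : (d : ℝ) * (lam - N - lam / 4 / 2) ≤
        2 * (C * δ) ^ 2 * lam * (r * n) + 1 / (2 * (lam / 4)) * (N ^ 2 * (r * n)) :=
      hsum.trans (add_le_add (hA.trans hell) (by gcongr))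
    have e1 : (d : ℝ) * (lam - N - lam / 4 / 2) = lam * ((d : ℝ) * (7 / 8 - δ)) := by
      rw [hNδ]; ring
    have e2 : 2 * (C * δ) ^ 2 * lam * (r * n) + 1 / (2 * (lam / 4)) * (N ^ 2 * (r * n))
      = lam * (2 * (C * δ) ^ 2 * (r * n) + 2 * δ ^ 2 * (r * n)) := by
      rw [hNδ]; field_simp; ring
    rw [e1, e2] at h1
    exact le_of_mul_le_mul_left h1 hlam0
  by_contra hcon
  push Not at hcon
  have hd5 : 5 * C ^ 2 * δ ^ 2 * (r * n) < d := by linarith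
  have hrn : (0:ℝ) < r * n := by
    have : (0:ℝ) < r := by exact_mod_cast hr
    have : (0:ℝ) < n := by exact_mod_cast hn
    positivity
  have hk1 : 5 * C ^ 2 * δ ^ 2 < 1 := by
    by_contra h
    push Not at h
    nlinarith
  have hC2 : 4 * δ ^ 2 ≤ C ^ 2 * δ ^ 2 := by
    have : 4 ≤ C ^ 2 := by nlinarith
    exact mul_le_mul_of_nonneg_right this (sq_nonneg δ)
  have hδ1 : δ < 1 / 4 := by nlinarith
  have hd0 : (0:ℝ) < d := by
    have : 0 ≤ 5 * C ^ 2 * δ ^ 2 * (r * n) := by positivity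
    linarith
  have h9 : 2 * δ ^ 2 * (r * n) ≤ 1 / 2 * (C ^ 2 * δ ^ 2) * (r * n) :=
    mul_le_mul_of_nonneg_right (by linarith) hrn.le
  have h10 : (d:ℝ) * (1 / 4 - δ) > 0 := mul_pos hd0 (by linarith)
  nlinarith

end core

section glue

variable {n r p : ℕ}

lemma lam2_props (hn : 2 ≤ n) (G : SimpleGraph (Fin n)) [DecidableRel G.Adj] (hG : G.Connected) :
    0 < lam2 (G.lapMatrix ℝ) ∧ ∀ x : Fin n → ℝ, ∑ i, x i = 0 →
      lam2 (G.lapMatrix ℝ) * ∑ i, x i ^ 2 ≤ x ⬝ᵥ (G.lapMatrix ℝ *ᵥ x) := by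
  set L := G.lapMatrix ℝ with hL
  have hpsd : ∀ x : Fin n → ℝ, 0 ≤ x ⬝ᵥ (L *ᵥ x) := by
    intro x
    simpa using (SimpleGraph.posSemidef_lapMatrix ℝ G).dotProduct_mulVec_nonneg x
  let T : Set (Fin n → ℝ) := {x | ∑ i, x i = 0 ∧ ∑ i, x i ^ 2 = 1}
  have hset : {t : ℝ | ∃ x : Fin n → ℝ, (∑ i, x i = 0) ∧ (∑ i, (x i) ^ 2 = 1) ∧ t = x ⬝ᵥ (L *ᵥ x)}
      = (fun x => x ⬝ᵥ (L *ᵥ x)) '' T := by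
    ext t; constructor
    · rintro ⟨x, h1, h2, h3⟩; exact ⟨x, ⟨h1, h2⟩, h3.symm⟩
    · rintro ⟨x, ⟨h1, h2⟩, h3⟩; exact ⟨x, h1, h2, h3.symm⟩
  have hcont : Continuous fun x : Fin n → ℝ => x ⬝ᵥ (L *ᵥ x) := by fun_prop
  have hcl : IsClosed T := by
    apply IsClosed.inter
    · exact isClosed_eq (by fun_prop) continuous_const
    · exact isClosed_eq (by fun_prop) continuous_const
  have hcomp : IsCompact T := by
    refine (isCompact_univ_pi (fun _ : Fin n => isCompact_Icc (a := (-1:ℝ)) (b := 1))).of_isClosed_subset hcl ?_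
    rintro x ⟨-, h2⟩ i -
    have : x i ^ 2 ≤ 1 := h2 ▸ Finset.single_le_sum (f := fun i => x i ^ 2) (fun _ _ => sq_nonneg _) (Finset.mem_univ i)
    exact abs_le.1 (abs_le_one_iff_mul_self_le_one.2 (by nlinarith))
  have hbdd : BddBelow ((fun x => x ⬝ᵥ (L *ᵥ x)) '' T) :=
    ⟨0, by rintro _ ⟨x, -, rfl⟩; exact hpsd x⟩
  -- normalization
  have hnorm : ∀ x : Fin n → ℝ, ∑ i, x i = 0 → 0 < ∑ i, x i ^ 2 →
      (Real.sqrt (∑ i, x i ^ 2))⁻¹ • x ∈ T := by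
    intro x h1 h2
    refine ⟨by simp [← Finset.mul_sum, h1], ?_⟩
    simp only [Pi.smul_apply, smul_eq_mul, mul_pow, ← Finset.mul_sum, inv_pow, Real.sq_sqrt h2.le]
    field_simp
  have hne : T.Nonempty := by
    let x : Fin n → ℝ := fun i => if i = ⟨0, by omega⟩ then 1 else if i = ⟨1, by omega⟩ then -1 else 0
    refine ⟨_, hnorm x ?_ ?_⟩
    · have : ∀ i, x i = (if i = ⟨0, by omega⟩ then (1:ℝ) else 0) - (if i = ⟨1, by omega⟩ then 1 else 0) := by
        intro i
        simp only [x]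
        split_ifs with h1 h2
        · exfalso; rw [h1] at h2; simp at h2
        all_goals norm_num
      simp only [this, Finset.sum_sub_distrib]
      simp
    · refine Finset.sum_pos' (fun _ _ => sq_nonneg _) ⟨⟨0, by omega⟩, Finset.mem_univ _, ?_⟩
      simp [x]
  constructor
  · unfold lam2
    rw [hset]
    obtain ⟨x, hxT, hx⟩ := (hcomp.image hcont).sInf_mem (hne.image _)
    rw [← hx]
    refine lt_of_le_of_ne (hpsd x) fun h0 => ?_
    have := (SimpleGraph.lapMatrix_toLinearMap₂'_apply'_eq_zero_iff_forall_reachable G x).1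
      (by rw [Matrix.toLinearMap₂'_apply']; exact h0.symm)
    have hc : ∀ i, x i = x ⟨0, by omega⟩ := fun i => this _ _ (hG.preconnected _ _)
    obtain ⟨h1, h2⟩ := hxT
    rw [Finset.sum_congr rfl fun i _ => hc i] at h1
    have hn0 : (n:ℝ) ≠ 0 := by positivity
    have h3 : x ⟨0, by omega⟩ = 0 := by simpa [hn0] using h1
    simp [hc, h3] at h2
  · intro x hx
    have h0 : 0 ≤ ∑ i, x i ^ 2 := Finset.sum_nonneg fun _ _ => sq_nonneg _
    rcases h0.eq_or_lt with h | h
    · rw [← h]; simpa using hpsd x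
    · have h1 : lam2 L ≤ ((Real.sqrt (∑ i, x i ^ 2))⁻¹ • x) ⬝ᵥ
          (L *ᵥ ((Real.sqrt (∑ i, x i ^ 2))⁻¹ • x)) := by
        unfold lam2
        rw [hset]
        exact csInf_le hbdd ⟨_, hnorm x hx h, rfl⟩
      have h2 := mul_le_mul_of_nonneg_right h1 h0
      refine h2.trans (le_of_eq ?_)
      simp only [Matrix.mulVec_smul, smul_dotProduct, dotProduct_smul, smul_eq_mul]
      have h3 := Real.sq_sqrt h0
      have h4 : Real.sqrt (∑ i, x i ^ 2) ≠ 0 := (Real.sqrt_pos.2 h).ne'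
      set s := Real.sqrt (∑ i, x i ^ 2)
      rw [← h3]
      field_simp

lemma opNorm_bound {ι : Type*} [Fintype ι] [DecidableEq ι] (M : Matrix ι ι ℝ) (x : ι → ℝ) :
    ∑ q, ((M *ᵥ x) q) ^ 2 ≤ opNorm M ^ 2 * ∑ q, x q ^ 2 := by
  have h := ((Matrix.toEuclideanLin (𝕜 := ℝ) (m := ι) (n := ι)).trans
      LinearMap.toContinuousLinearMap M).le_opNorm (WithLp.toLp 2 x)
  have h2 := pow_le_pow_left₀ (norm_nonneg _) h 2
  rw [mul_pow, EuclideanSpace.norm_sq_eq, EuclideanSpace.norm_sq_eq] at h2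
  simpa [opNorm] using h2

open scoped MatrixOrder ComplexOrder in
lemma opt_of_rank (Lhat : Matrix (Fin n × Fin r) (Fin n × Fin r) ℝ)
    (Y : Matrix (Fin n × Fin r) (Fin p) ℝ) (hY : IsSecondOrderCritical Lhat Y)
    (hrank : Y.rank < p) (X : Matrix (Fin n × Fin r) (Fin n × Fin r) ℝ) (hX : SDPFeasible X) :
    ip Lhat (Y * Yᵀ) ≤ ip Lhat X := by
  obtain ⟨hf, h1, h2⟩ := hY
  obtain ⟨hpsd, hdiag⟩ := hX
  have hXs : Xᵀ = X := by
    have := hpsd.1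
    rwa [Matrix.IsHermitian, Matrix.conjTranspose_eq_transpose_of_trivial] at this
  -- kernel vector
  obtain ⟨u, hu0, hu⟩ : ∃ u : Fin p → ℝ, u ≠ 0 ∧ Y *ᵥ u = 0 := by
    have h3 := LinearMap.finrank_range_add_finrank_ker Y.mulVecLin
    have h4 : Y.rank = Module.finrank ℝ (LinearMap.range Y.mulVecLin) := rfl
    rw [← h4] at h3
    simp only [Module.finrank_fintype_fun_eq_card, Fintype.card_fin] at h3
    have h5 : 0 < Module.finrank ℝ (LinearMap.ker Y.mulVecLin) := by omega
    obtain ⟨⟨u, hu⟩, hne⟩ := (Module.finrank_pos_iff_exists_ne_zero).1 h5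
    exact ⟨u, fun h => hne (by ext; simp [h]), by simpa using hu⟩
  have hS : ∀ v : Fin n × Fin r → ℝ, 0 ≤ v ⬝ᵥ (Smat Lhat Y *ᵥ v) := by
    intro v
    have hdot : ∀ q, ∑ c, u c * Y q c = 0 := by
      intro q
      have := congrFun hu q
      simpa [Matrix.mulVec, dotProduct, mul_comm] using this
    have h3 := h2 (Matrix.vecMulVec v u) (by
      intro i
      ext a b
      simp only [Matrix.add_apply, Matrix.mul_apply, blk, Matrix.of_apply, Matrix.transpose_apply,
        Matrix.vecMulVec_apply, Matrix.zero_apply]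
      have e1 : ∑ c, v (i, a) * u c * Y (i, b) c = 0 := by
        simp only [mul_assoc, ← Finset.mul_sum, hdot, mul_zero]
      have e2 : ∑ c, Y (i, a) c * (v (i, b) * u c) = 0 := by
        rw [← mul_zero (v (i, b)), ← hdot (i, a), Finset.mul_sum]
        exact Finset.sum_congr rfl fun c _ => by ring
      rw [e1, e2, add_zero])
    have h4 : (Smat Lhat Y * Matrix.vecMulVec v u * (Matrix.vecMulVec v u)ᵀ).trace
        = (u ⬝ᵥ u) * (v ⬝ᵥ (Smat Lhat Y *ᵥ v)) := by
      rw [Matrix.transpose_vecMulVec, Matrix.mul_assoc, Matrix.vecMulVec_mul_vecMulVec,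
        Matrix.mul_vecMulVec, Matrix.trace_vecMulVec]
      simp [Matrix.mulVec_smul, dotProduct_comm]
    rw [h4] at h3
    have h5 : 0 < u ⬝ᵥ u := by
      obtain ⟨c, hc⟩ := Function.ne_iff.1 hu0
      exact Finset.sum_pos' (fun _ _ => mul_self_nonneg _) ⟨c, Finset.mem_univ _, mul_self_pos.2 hc⟩
    exact nonneg_of_mul_nonneg_right h3 h5
  have hSX : 0 ≤ (Smat Lhat Y * X).trace := by
    obtain ⟨B, hB⟩ := CStarAlgebra.nonneg_iff_eq_star_mul_self.mp hpsd.nonneg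
    rw [hB, Matrix.star_eq_conjTranspose, Matrix.conjTranspose_eq_transpose_of_trivial, ← Matrix.mul_assoc, Matrix.trace_mul_comm,
      Matrix.trace]
    refine Finset.sum_nonneg fun k _ => ?_
    have := hS (fun q => B k q)
    simpa only [Matrix.diag, Matrix.mul_apply, dotProduct, Matrix.mulVec, Matrix.transpose_apply]
      using this
  have hd : ∀ i a b, X (i, a) (i, b) = if a = b then (1:ℝ) else 0 := by
    intro i a b
    have := congrFun (congrFun hdiag (i, a)) (i, b)
    have h6 : X (i, b) (i, a) = X (i, a) (i, b) := congrFun (congrFun hXs (i, a)) (i, b)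
    simp only [SBD, Matrix.of_apply, if_true, h6, Matrix.one_apply, Prod.mk.injEq, true_and] at this
    rw [← this]; ring
  rw [Smat, Matrix.sub_mul, Matrix.trace_sub, trace_SBD_mul _ _ 1 hd, Matrix.mul_assoc] at hSX
  unfold ip
  rw [hXs, Matrix.transpose_mul, Matrix.transpose_transpose]
  linarith

lemma sdp_of_feasible {Y : Matrix (Fin n × Fin r) (Fin p) ℝ} (h : Feasible Y) :
    SDPFeasible (Y * Yᵀ) := by
  constructor
  · have := Matrix.posSemidef_self_mul_conjTranspose Y
    rwa [Matrix.conjTranspose_eq_transpose_of_trivial] at this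
  · ext ⟨i, a⟩ ⟨j, b⟩
    simp only [SBD, Matrix.of_apply, Matrix.one_apply, Prod.mk.injEq]
    by_cases hij : i = j
    · subst hij
      simp only [if_true, Matrix.mul_apply, Matrix.transpose_apply, feas_iff h, true_and]
      by_cases hab : a = b
      · subst hab; norm_num
      · simp [hab, Ne.symm hab]
    · simp [hij]

/-! conjugation by `D` -/

lemma Dmat_mul_apply {κ : Type*} (Zb : Fin n → Matrix (Fin r) (Fin r) ℝ)
    (W : Matrix (Fin n × Fin r) κ ℝ) (i : Fin n) (a : Fin r) (c : κ) :
    (Dmat Zb * W) (i, a) c = ∑ b, Zb i a b * W (i, b) c := by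
  rw [Matrix.mul_apply, Fintype.sum_prod_type, Finset.sum_eq_single i]
  · simp [Dmat]
  · intro j _ hj; simp [Dmat, Ne.symm hj]
  · simp

lemma Dmat_transpose (Zb : Fin n → Matrix (Fin r) (Fin r) ℝ) :
    (Dmat Zb)ᵀ = Dmat (fun i => (Zb i)ᵀ) := by
  ext q q'
  simp only [Dmat, Matrix.transpose_apply, Matrix.of_apply]
  by_cases h : q.1 = q'.1
  · simp [h]
  · simp [h, Ne.symm h]

lemma Dmat_mul_Dmat (Z W : Fin n → Matrix (Fin r) (Fin r) ℝ) (h : ∀ i, Z i * W i = 1) :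
    Dmat Z * Dmat W = 1 := by
  ext ⟨i, a⟩ ⟨j, b⟩
  rw [Dmat_mul_apply]
  by_cases hij : i = j
  · subst hij
    have := congrFun (congrFun (h i) a) b
    simpa [Dmat, Matrix.mul_apply, Matrix.one_apply] using this
  · simp [Dmat, hij, Matrix.one_apply]

lemma mul_Dmat_apply {κ : Type*} (Zb : Fin n → Matrix (Fin r) (Fin r) ℝ)
    (W : Matrix κ (Fin n × Fin r) ℝ) (i : Fin n) (a : Fin r) (c : κ) :
    (W * Dmat Zb) c (i, a) = ∑ b, W c (i, b) * Zb i b a := by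
  rw [Matrix.mul_apply, Fintype.sum_prod_type, Finset.sum_eq_single i]
  · simp [Dmat]
  · intro j _ hj; simp [Dmat, hj]
  · simp

lemma SBD_conj (Zb : Fin n → Matrix (Fin r) (Fin r) ℝ)
    (M : Matrix (Fin n × Fin r) (Fin n × Fin r) ℝ) :
    SBD ((Dmat Zb)ᵀ * M * Dmat Zb) = (Dmat Zb)ᵀ * SBD M * Dmat Zb := by
  have e : ∀ (M : Matrix (Fin n × Fin r) (Fin n × Fin r) ℝ) i a j b,
      ((Dmat Zb)ᵀ * M * Dmat Zb) (i, a) (j, b) = ∑ d, ∑ c, Zb i c a * M (i, c) (j, d) * Zb j d b := by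
    intro M i a j b
    rw [mul_Dmat_apply]
    refine Finset.sum_congr rfl fun d _ => ?_
    rw [Dmat_transpose, Dmat_mul_apply, Finset.sum_mul]
    rfl
  ext ⟨i, a⟩ ⟨j, b⟩
  rw [e]
  simp only [SBD, Matrix.of_apply]
  by_cases hij : i = j
  · subst hij
    simp only [if_true, e]
    rw [Finset.sum_comm (f := fun d c => Zb i c b * M (i, c) (i, d) * Zb i d a)]
    rw [← Finset.sum_add_distrib, Finset.sum_div]
    refine Finset.sum_congr rfl fun d _ => ?_
    rw [← Finset.sum_add_distrib, Finset.sum_div]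
    exact Finset.sum_congr rfl fun c _ => by ring
  · simp [hij]

lemma critical_conj (Zb : Fin n → Matrix (Fin r) (Fin r) ℝ) (hZb : ∀ i, Zb i * (Zb i)ᵀ = 1)
    (M : Matrix (Fin n × Fin r) (Fin n × Fin r) ℝ)
    (Y : Matrix (Fin n × Fin r) (Fin p) ℝ) (hY : IsSecondOrderCritical M Y) :
    IsSecondOrderCritical ((Dmat Zb)ᵀ * M * Dmat Zb) ((Dmat Zb)ᵀ * Y) := by
  obtain ⟨hf, h1, h2⟩ := hY
  have hZb' : ∀ i, (Zb i)ᵀ * Zb i = 1 := fun i => mul_eq_one_comm.1 (hZb i)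
  have hD1 : Dmat Zb * (Dmat Zb)ᵀ = 1 := by
    rw [Dmat_transpose]; exact Dmat_mul_Dmat _ _ hZb
  have hblk : ∀ W : Matrix (Fin n × Fin r) (Fin p) ℝ, ∀ i, blk (Dmat Zb * W) i = Zb i * blk W i := by
    intro W i; ext a c
    simp only [blk, Matrix.of_apply, Dmat_mul_apply]
    rw [Matrix.mul_apply]; rfl
  have hblk' : ∀ W : Matrix (Fin n × Fin r) (Fin p) ℝ, ∀ i, blk ((Dmat Zb)ᵀ * W) i = (Zb i)ᵀ * blk W i := by
    intro W i; ext a c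
    rw [Dmat_transpose]
    simp only [blk, Matrix.of_apply, Dmat_mul_apply]
    rw [Matrix.mul_apply]; rfl
  have hS : Smat ((Dmat Zb)ᵀ * M * Dmat Zb) ((Dmat Zb)ᵀ * Y) = (Dmat Zb)ᵀ * Smat M Y * Dmat Zb := by
    unfold Smat
    have : (Dmat Zb)ᵀ * M * Dmat Zb * ((Dmat Zb)ᵀ * Y) * ((Dmat Zb)ᵀ * Y)ᵀ
        = (Dmat Zb)ᵀ * (M * Y * Yᵀ) * Dmat Zb := by
      rw [Matrix.transpose_mul, Matrix.transpose_transpose]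
      calc _ = (Dmat Zb)ᵀ * M * (Dmat Zb * (Dmat Zb)ᵀ) * Y * Yᵀ * Dmat Zb := by
            simp only [Matrix.mul_assoc]
        _ = _ := by rw [hD1, Matrix.mul_one]; simp only [Matrix.mul_assoc]
    rw [this, SBD_conj, Matrix.mul_sub, Matrix.sub_mul]
  refine ⟨?_, ?_, ?_⟩
  · intro i
    rw [hblk', Matrix.transpose_mul, Matrix.transpose_transpose]
    calc _ = (Zb i)ᵀ * (blk Y i * (blk Y i)ᵀ) * Zb i := by simp only [Matrix.mul_assoc]
      _ = 1 := by rw [hf i, Matrix.mul_one, hZb']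
  · rw [hS]
    calc _ = (Dmat Zb)ᵀ * Smat M Y * (Dmat Zb * (Dmat Zb)ᵀ) * Y := by simp only [Matrix.mul_assoc]
      _ = 0 := by rw [hD1, Matrix.mul_one, Matrix.mul_assoc, h1, Matrix.mul_zero]
  · intro W hW
    rw [hS]
    have h3 := h2 (Dmat Zb * W) (by
      intro i
      have h4 := hW i
      rw [hblk', Matrix.transpose_mul, Matrix.transpose_transpose] at h4
      rw [hblk, Matrix.transpose_mul]
      have h5 : Zb i * (blk W i * ((blk Y i)ᵀ * Zb i) + (Zb i)ᵀ * blk Y i * (blk W i)ᵀ) * (Zb i)ᵀ = 0 := by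
        rw [h4]; simp
      rw [← h5, Matrix.mul_add, Matrix.add_mul]
      congr 1
      · calc _ = Zb i * blk W i * (blk Y i)ᵀ * (Zb i * (Zb i)ᵀ) := by rw [hZb, Matrix.mul_one]
          _ = _ := by simp only [Matrix.mul_assoc]
      · calc _ = (Zb i * (Zb i)ᵀ) * blk Y i * ((blk W i)ᵀ * (Zb i)ᵀ) := by rw [hZb, Matrix.one_mul]
          _ = _ := by simp only [Matrix.mul_assoc])
    refine h3.trans (le_of_eq ?_)
    rw [Matrix.transpose_mul]
    calc _ = (Smat M Y * Dmat Zb * W * Wᵀ * (Dmat Zb)ᵀ).trace := by simp only [Matrix.mul_assoc]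
      _ = _ := by rw [Matrix.trace_mul_comm]; simp only [Matrix.mul_assoc]

end glue

/-- **Theorem 1.2 (rank bound and global optimality under noise).**  Suppose `G` is connected and
`p > r + 2`, and set `C_p = 2(p + r − 2)/(p − r − 2)`.  Then every second-order critical point `Y`
of the rank-`p` problem satisfies `rank Y ≤ r + 5 C_p² (‖Δ‖/λ₂)² r n`.  If moreover
`p > r + 5 C_p² (‖Δ‖/λ₂)² r n`, then `Y` is a global minimizer of the rank-`p` problem and
`Y Yᵀ` is an optimal solution of the SDP relaxation. -/
theorem noisy_rank_bound_and_optimality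
    (n r p : ℕ) (hn : 1 ≤ n) (hr : 1 ≤ r) (hrp : r ≤ p) (hp : r + 2 < p)
    (G : SimpleGraph (Fin n)) [DecidableRel G.Adj] (hG : G.Connected)
    (Zb : Fin n → Matrix (Fin r) (Fin r) ℝ) (hZb : ∀ i, Zb i * (Zb i)ᵀ = 1)
    (Δ : Matrix (Fin n × Fin r) (Fin n × Fin r) ℝ) (hΔsym : Δᵀ = Δ)
    (hΔsupp : ∀ q q' : Fin n × Fin r, ¬ G.Adj q.1 q'.1 → Δ q q' = 0)
    (Lhat : Matrix (Fin n × Fin r) (Fin n × Fin r) ℝ)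
    (hLhat : Lhat = LZmat (G.lapMatrix ℝ) Zb - Δ)
    (Cp : ℝ) (hCp : Cp = 2 * ((p : ℝ) + r - 2) / ((p : ℝ) - r - 2))
    (Y : Matrix (Fin n × Fin r) (Fin p) ℝ)
    (hY : IsSecondOrderCritical Lhat Y) :
    (Y.rank : ℝ) ≤ r + 5 * Cp ^ 2 * (opNorm Δ / lam2 (G.lapMatrix ℝ)) ^ 2 * (r * n) ∧
    ((r + 5 * Cp ^ 2 * (opNorm Δ / lam2 (G.lapMatrix ℝ)) ^ 2 * (r * n) < (p : ℝ)) →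
      (∀ Y' : Matrix (Fin n × Fin r) (Fin p) ℝ, Feasible Y' →
        ip Lhat (Y * Yᵀ) ≤ ip Lhat (Y' * Y'ᵀ)) ∧
      (∀ X : Matrix (Fin n × Fin r) (Fin n × Fin r) ℝ, SDPFeasible X →
        ip Lhat (Y * Yᵀ) ≤ ip Lhat X)) := by
  have hrank : (Y.rank : ℝ) ≤
      r + 5 * Cp ^ 2 * (opNorm Δ / lam2 (G.lapMatrix ℝ)) ^ 2 * (r * n) := by
    rcases Nat.lt_or_ge n 2 with hn1 | hn2
    · have h1 : n = 1 := by omega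
      have h2 : (Y.rank : ℝ) ≤ r := by
        have := Y.rank_le_card_height
        simp [h1] at this
        exact_mod_cast this
      have h3 : 0 ≤ 5 * Cp ^ 2 * (opNorm Δ / lam2 (G.lapMatrix ℝ)) ^ 2 * (r * n) := by positivity
      linarith
    · obtain ⟨hl0, hl⟩ := lam2_props hn2 G hG
      have hD1 : Dmat Zb * (Dmat Zb)ᵀ = 1 := by
        rw [Dmat_transpose]; exact Dmat_mul_Dmat _ _ hZb
      have hD2 : (Dmat Zb)ᵀ * Dmat Zb = 1 := mul_eq_one_comm.1 hD1
      have hc := critical_conj Zb hZb Lhat Y hY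
      have hL : (Dmat Zb)ᵀ * Lhat * Dmat Zb
          = (G.lapMatrix ℝ) ⊗ₖ (1 : Matrix (Fin r) (Fin r) ℝ) - (Dmat Zb)ᵀ * Δ * Dmat Zb := by
        rw [hLhat, LZmat, Matrix.mul_sub, Matrix.sub_mul]
        congr 1
        calc _ = ((Dmat Zb)ᵀ * Dmat Zb) * ((G.lapMatrix ℝ) ⊗ₖ (1 : Matrix (Fin r) (Fin r) ℝ))
              * ((Dmat Zb)ᵀ * Dmat Zb) := by simp only [Matrix.mul_assoc]
          _ = _ := by rw [hD2, Matrix.one_mul, Matrix.mul_one]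
      rw [hL] at hc
      have hiso : ∀ E : Matrix (Fin n × Fin r) (Fin n × Fin r) ℝ, Eᵀ * E = 1 →
          ∀ x : Fin n × Fin r → ℝ, ∑ q, ((E *ᵥ x) q) ^ 2 = ∑ q, x q ^ 2 := by
        intro E hE x
        have e : ∀ y : Fin n × Fin r → ℝ, ∑ q, y q ^ 2 = y ⬝ᵥ y := fun y => by
          simp [dotProduct, sq]
        rw [e, e, Matrix.dotProduct_mulVec, Matrix.vecMul_mulVec, hE, Matrix.vecMul_one]
      have hN : ∀ x, ∑ q, ((((Dmat Zb)ᵀ * Δ * Dmat Zb) *ᵥ x) q) ^ 2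
          ≤ opNorm Δ ^ 2 * ∑ q, x q ^ 2 := by
        intro x
        rw [← Matrix.mulVec_mulVec, ← Matrix.mulVec_mulVec,
          hiso _ (by rw [Matrix.transpose_transpose]; exact hD1), ← hiso _ hD2 x]
        exact opNorm_bound Δ _
      have hrow : ∀ i, ∑ j, G.lapMatrix ℝ i j = 0 := by
        intro i
        have := congrFun (SimpleGraph.lapMatrix_mulVec_const_eq_zero (R := ℝ) G) i
        simpa [Matrix.mulVec, dotProduct] using this
      have hoff : ∀ i j, i ≠ j → G.lapMatrix ℝ i j ≤ 0 := by
        intro i j hij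
        simp only [SimpleGraph.lapMatrix, SimpleGraph.degMatrix, Matrix.sub_apply,
          Matrix.diagonal_apply_ne _ hij, SimpleGraph.adjMatrix_apply]
        split_ifs <;> norm_num
      have hrk := rank_core (G.lapMatrix ℝ) (SimpleGraph.isSymm_lapMatrix ℝ G) hn hr hp hrow hoff
        (lam2 (G.lapMatrix ℝ)) hl0 (by
          intro x hx
          refine (hl x hx).trans (le_of_eq ?_)
          simp only [dotProduct, Matrix.mulVec, Finset.mul_sum]
          exact Finset.sum_congr rfl fun i _ => Finset.sum_congr rfl fun j _ => by ring)
        ((Dmat Zb)ᵀ * Δ * Dmat Zb) (by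
          rw [Matrix.transpose_mul, Matrix.transpose_mul, Matrix.transpose_transpose, hΔsym,
            Matrix.mul_assoc])
        (opNorm Δ) (norm_nonneg _) hN ((Dmat Zb)ᵀ * Y) hc
      rw [← hCp] at hrk
      have hle : Y.rank ≤ ((Dmat Zb)ᵀ * Y).rank := by
        have : Y = Dmat Zb * ((Dmat Zb)ᵀ * Y) := by
          rw [← Matrix.mul_assoc, hD1, Matrix.one_mul]
        conv_lhs => rw [this]
        exact Matrix.rank_mul_le_right _ _
      have hle' : (Y.rank : ℝ) ≤ ((Dmat Zb)ᵀ * Y).rank := by exact_mod_cast hle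
      exact hle'.trans hrk
  refine ⟨hrank, fun hlt => ?_⟩
  have hrp' : Y.rank < p := by exact_mod_cast lt_of_le_of_lt hrank hlt
  exact ⟨fun Y' hY' => opt_of_rank Lhat Y hY hrp' _ (sdp_of_feasible hY'),
    fun X hX => opt_of_rank Lhat Y hY hrp' X hX⟩

end SyncPaper
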